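/- Let R be a left noetherian ring and a left FGF-ring. Then the following are equivalent: (1) R is a quasi-Frobenius ring; (2) R is weakly quasi-Frobenius; (3) R is left FP-injective; (4) R is a right Kasch ring; (5) R is semiregular; (6) R is left or right semiartinian; (7) the socle soc(_RR) is an essential submodule of the left module _RR. -/

import Mathlib

/-!
Common definitions: rings are associative with identity, not necessarily commutative.
Left `R`-modules are `Module R M`; right `R`-modules are `Module Rᵐᵒᵖ M`.
-/

universe u

open MulOpposite Function Pointwise

section Defs

variable (R : Type u) [Ring R]

/-- Defining relations of the tensor product `K ⊗_R M` of a right `R`-module `K`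
and a left `R`-module `M`, inside the free abelian group on `K × M`. -/
def TensorRels (K M : Type u) [AddCommGroup K] [Module Rᵐᵒᵖ K]
    [AddCommGroup M] [Module R M] : AddSubgroup (FreeAbelianGroup (K × M)) :=
  AddSubgroup.closure
    ({x | ∃ k₁ k₂ m, x = FreeAbelianGroup.of (k₁ + k₂, m) - FreeAbelianGroup.of (k₁, m) -
        FreeAbelianGroup.of (k₂, m)} ∪
     {x | ∃ k m₁ m₂, x = FreeAbelianGroup.of (k, m₁ + m₂) - FreeAbelianGroup.of (k, m₁) -
        FreeAbelianGroup.of (k, m₂)} ∪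
     {x | ∃ (r : R) (k : K) (m : M),
        x = FreeAbelianGroup.of (op r • k, m) - FreeAbelianGroup.of (k, r • m)})

/-- The tensor product `K ⊗_R M` of a right `R`-module `K` and a left `R`-module `M`
over the (not necessarily commutative) ring `R`, as an abelian group. -/
def NCTensor (K M : Type u) [AddCommGroup K] [Module Rᵐᵒᵖ K]
    [AddCommGroup M] [Module R M] : Type u :=
  FreeAbelianGroup (K × M) ⧸ TensorRels R K M

instance (K M : Type u) [AddCommGroup K] [Module Rᵐᵒᵖ K] [AddCommGroup M] [Module R M] :
    AddCommGroup (NCTensor R K M) :=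
  QuotientAddGroup.Quotient.addCommGroup _

/-- The map `μ ⊗ ν : K ⊗_R M → K' ⊗_R M'` induced by a map `μ` of right `R`-modules
and a map `ν` of left `R`-modules. -/
def tensorCongr {K K' M M' : Type u} [AddCommGroup K] [Module Rᵐᵒᵖ K]
    [AddCommGroup K'] [Module Rᵐᵒᵖ K'] [AddCommGroup M] [Module R M]
    [AddCommGroup M'] [Module R M'] (μ : K →ₗ[Rᵐᵒᵖ] K') (ν : M →ₗ[R] M') :
    NCTensor R K M →+ NCTensor R K' M' :=
  QuotientAddGroup.map (TensorRels R K M) (TensorRels R K' M')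
    (FreeAbelianGroup.lift fun p : K × M => FreeAbelianGroup.of (μ p.1, ν p.2))
    (by
      refine (AddSubgroup.closure_le _).2 ?_
      rintro x ((⟨k₁, k₂, m, rfl⟩ | ⟨k, m₁, m₂, rfl⟩) | ⟨r, k, m, rfl⟩) <;>
        refine AddSubgroup.mem_comap.2 (AddSubgroup.subset_closure ?_)
      · exact Or.inl <| Or.inl ⟨μ k₁, μ k₂, ν m, by simp [map_add]⟩
      · exact Or.inl <| Or.inr ⟨μ k, ν m₁, ν m₂, by simp [map_add]⟩
      · exact Or.inr ⟨r, μ k, ν m, by simp [map_smul]⟩)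

/-- A left `R`-module `M` is flat if `μ ⊗ M` is injective for every injective
homomorphism `μ` of right `R`-modules. -/
def ModFlat (M : Type u) [AddCommGroup M] [Module R M] : Prop :=
  ∀ (K L : Type u) [AddCommGroup K] [Module Rᵐᵒᵖ K] [AddCommGroup L] [Module Rᵐᵒᵖ L]
    (μ : K →ₗ[Rᵐᵒᵖ] L), Injective μ →
      Injective (tensorCongr R μ (LinearMap.id : M →ₗ[R] M))

/-- A right `R`-module `M` is flat if `M ⊗ μ` is injective for every injective
homomorphism `μ` of left `R`-modules. -/
def ModFlatRight (M : Type u) [AddCommGroup M] [Module Rᵐᵒᵖ M] : Prop :=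
  ∀ (K L : Type u) [AddCommGroup K] [Module R K] [AddCommGroup L] [Module R L]
    (μ : K →ₗ[R] L), Injective μ →
      Injective (tensorCongr R (LinearMap.id : M →ₗ[Rᵐᵒᵖ] M) μ)

/-- A left `R`-module `M` is fp-flat if `μ ⊗ M` is injective for every injective
homomorphism `μ` of finitely presented right `R`-modules. -/
def FpFlat (M : Type u) [AddCommGroup M] [Module R M] : Prop :=
  ∀ (K L : Type u) [AddCommGroup K] [Module Rᵐᵒᵖ K] [AddCommGroup L] [Module Rᵐᵒᵖ L],
    Module.FinitePresentation Rᵐᵒᵖ K → Module.FinitePresentation Rᵐᵒᵖ L →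
    ∀ (μ : K →ₗ[Rᵐᵒᵖ] L), Injective μ →
      Injective (tensorCongr R μ (LinearMap.id : M →ₗ[R] M))

/-- A right `R`-module `M` is fp-flat if `M ⊗ μ` is injective for every injective
homomorphism `μ` of finitely presented left `R`-modules. -/
def FpFlatRight (M : Type u) [AddCommGroup M] [Module Rᵐᵒᵖ M] : Prop :=
  ∀ (K L : Type u) [AddCommGroup K] [Module R K] [AddCommGroup L] [Module R L],
    Module.FinitePresentation R K → Module.FinitePresentation R L →
    ∀ (μ : K →ₗ[R] L), Injective μ →
      Injective (tensorCongr R (LinearMap.id : M →ₗ[Rᵐᵒᵖ] M) μ)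

/-- `Ext¹_R(F, M) = 0`. -/
def ExtVanish (F M : Type u) [AddCommGroup F] [Module R F] [AddCommGroup M] [Module R M] :
    Prop :=
  Subsingleton
    (((Ext ℤ (ModuleCat.{u} R) 1).obj (Opposite.op (ModuleCat.of R F))).obj (ModuleCat.of R M))

/-- A left `R`-module `M` is FP-injective (absolutely pure) if `Ext¹_R(F, M) = 0` for
every finitely presented left `R`-module `F`. -/
def FPInjective (M : Type u) [AddCommGroup M] [Module R M] : Prop :=
  ∀ (F : Type u) [AddCommGroup F] [Module R F], Module.FinitePresentation R F → ExtVanish R F M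

/-- A left `R`-module `M` is fp-injective if for every injective homomorphism `μ : K → L`
of finitely presented left `R`-modules, the induced map `Hom(L, M) → Hom(K, M)` is
surjective. -/
def FpInjective (M : Type u) [AddCommGroup M] [Module R M] : Prop :=
  ∀ (K L : Type u) [AddCommGroup K] [Module R K] [AddCommGroup L] [Module R L],
    Module.FinitePresentation R K → Module.FinitePresentation R L →
    ∀ (μ : K →ₗ[R] L), Injective μ → ∀ f : K →ₗ[R] M, ∃ g : L →ₗ[R] M, g ∘ₗ μ = f

/-- A left `R`-module `K` is an FP-cogenerator if for every nonzero homomorphism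
`f : M → N` from a finitely generated module `M` to a finitely presented module `N`
there is `g : N → K` with `g ∘ f ≠ 0`. -/
def IsFPCogenerator (K : Type u) [AddCommGroup K] [Module R K] : Prop :=
  ∀ (M N : Type u) [AddCommGroup M] [Module R M] [AddCommGroup N] [Module R N],
    Module.Finite R M → Module.FinitePresentation R N →
    ∀ f : M →ₗ[R] N, f ≠ 0 → ∃ g : N →ₗ[R] K, g ∘ₗ f ≠ 0

/-- A left `R`-module `K` is a cogenerator if for every nonzero homomorphism `f : M → N`
of left `R`-modules there is `g : N → K` with `g ∘ f ≠ 0`. -/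
def IsCogenerator (K : Type u) [AddCommGroup K] [Module R K] : Prop :=
  ∀ (M N : Type u) [AddCommGroup M] [Module R M] [AddCommGroup N] [Module R N],
    ∀ f : M →ₗ[R] N, f ≠ 0 → ∃ g : N →ₗ[R] K, g ∘ₗ f ≠ 0

/-- The canonical evaluation map `M → M** = Hom(Hom(M, R), R)` for a left `R`-module `M`;
here `M* = Hom_R(M, R)` is a right `R`-module. -/
def dualEval (M : Type u) [AddCommGroup M] [Module R M] :
    M →ₗ[R] ((M →ₗ[R] R) →ₗ[Rᵐᵒᵖ] R) where
  toFun m :=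
    { toFun := fun f => f m
      map_add' := fun f g => rfl
      map_smul' := fun r f => rfl }
  map_add' m m' := LinearMap.ext fun f => f.map_add m m'
  map_smul' r m := LinearMap.ext fun f => by simp [f.map_smul]

/-- The canonical evaluation map `M → M** = Hom(Hom(M, R), R)` for a right `R`-module `M`;
here `M* = Hom_R(M, R)` is a left `R`-module. -/
def dualEvalRight (M : Type u) [AddCommGroup M] [Module Rᵐᵒᵖ M] :
    M →ₗ[Rᵐᵒᵖ] ((M →ₗ[Rᵐᵒᵖ] R) →ₗ[R] R) where
  toFun m :=
    { toFun := fun f => f m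
      map_add' := fun f g => rfl
      map_smul' := fun r f => rfl }
  map_add' m m' := LinearMap.ext fun f => f.map_add m m'
  map_smul' r m := LinearMap.ext fun f => by simp [f.map_smul]

/-- The left annihilator of a subset `X ⊆ R`. -/
def lAnn (X : Set R) : Set R := {a | ∀ x ∈ X, a * x = 0}

/-- The right annihilator of a subset `X ⊆ R`. -/
def rAnn (X : Set R) : Set R := {a | ∀ x ∈ X, x * a = 0}

/-- `R` is left coherent: every finitely generated left ideal is finitely presented. -/
def LeftCoherent : Prop :=
  ∀ I : Submodule R R, I.FG → Module.FinitePresentation R I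

/-- `R` is right coherent: every finitely generated right ideal is finitely presented. -/
def RightCoherent : Prop :=
  ∀ I : Submodule Rᵐᵒᵖ R, I.FG → Module.FinitePresentation Rᵐᵒᵖ I

/-- A left `R`-module `M` embeds in a free left `R`-module. -/
def EmbedsInFree (M : Type u) [AddCommGroup M] [Module R M] : Prop :=
  ∃ (ι : Type u) (f : M →ₗ[R] (ι →₀ R)), Injective f

/-- A right `R`-module `M` embeds in a free right `R`-module. -/
def EmbedsInFreeRight (M : Type u) [AddCommGroup M] [Module Rᵐᵒᵖ M] : Prop :=
  ∃ (ι : Type u) (f : M →ₗ[Rᵐᵒᵖ] (ι →₀ R)), Injective f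

/-- `R` is a left IF-ring: every finitely presented left `R`-module embeds in a free module. -/
def LeftIF : Prop :=
  ∀ (M : Type u) [AddCommGroup M] [Module R M],
    Module.FinitePresentation R M → EmbedsInFree R M

/-- `R` is a right IF-ring: every finitely presented right `R`-module embeds in a free module. -/
def RightIF : Prop :=
  ∀ (M : Type u) [AddCommGroup M] [Module Rᵐᵒᵖ M],
    Module.FinitePresentation Rᵐᵒᵖ M → EmbedsInFreeRight R M

/-- A module is cyclic if it is generated by one element. -/
def CyclicModule (M : Type u) [AddCommGroup M] [Module R M] : Prop :=
  ∃ m : M, Submodule.span R {m} = ⊤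

/-- `R` is a left CF-ring: every cyclic left `R`-module embeds in a free module. -/
def LeftCF : Prop :=
  ∀ (M : Type u) [AddCommGroup M] [Module R M], CyclicModule R M → EmbedsInFree R M

/-- `R` is a left FGF-ring: every finitely generated left `R`-module embeds in a free module. -/
def LeftFGF : Prop :=
  ∀ (M : Type u) [AddCommGroup M] [Module R M], Module.Finite R M → EmbedsInFree R M

/-- `R` is a left Kasch ring: `Hom_R(M, R) ≠ 0` for every nonzero cyclic left `R`-module. -/
def LeftKasch : Prop :=
  ∀ (M : Type u) [AddCommGroup M] [Module R M],
    CyclicModule R M → Nontrivial M → ∃ f : M →ₗ[R] R, f ≠ 0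

/-- `R` is a right Kasch ring: `Hom_R(M, R) ≠ 0` for every nonzero cyclic right `R`-module. -/
def RightKasch : Prop :=
  ∀ (M : Type u) [AddCommGroup M] [Module Rᵐᵒᵖ M],
    CyclicModule Rᵐᵒᵖ M → Nontrivial M → ∃ f : M →ₗ[Rᵐᵒᵖ] R, f ≠ 0

/-- The socle of a module: the sum of all its simple submodules. -/
def socle (M : Type u) [AddCommGroup M] [Module R M] : Submodule R M :=
  sSup {N : Submodule R M | IsSimpleModule R N}

/-- `R` is left semiartinian: every nonzero cyclic left `R`-module has a nonzero socle. -/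
def LeftSemiartinian : Prop :=
  ∀ (M : Type u) [AddCommGroup M] [Module R M],
    CyclicModule R M → Nontrivial M → socle R M ≠ ⊥

/-- A submodule `N ⊆ M` is essential if it meets every nonzero submodule nontrivially. -/
def EssentialSub {M : Type u} [AddCommGroup M] [Module R M] (N : Submodule R M) : Prop :=
  ∀ P : Submodule R M, P ≠ ⊥ → N ⊓ P ≠ ⊥

/-- `R` is semiregular: `R/rad R` is von Neumann regular,
where `rad R` is the Jacobson radical. -/
def Semiregular : Prop :=
  ∀ a : R, ∃ x : R, a - a * x * a ∈ Ideal.jacobson (⊥ : Ideal R)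

/-- `R` is semiperfect: `R/rad R` is semisimple and idempotents lift modulo `rad R`. -/
def Semiperfect : Prop :=
  IsSemisimpleModule R (R ⧸ Ideal.jacobson (⊥ : Ideal R)) ∧
    ∀ a : R, a * a - a ∈ Ideal.jacobson (⊥ : Ideal R) →
      ∃ e : R, e * e = e ∧ e - a ∈ Ideal.jacobson (⊥ : Ideal R)

/-- A module is indecomposable if it is nonzero and is not the direct sum of two
nonzero submodules. -/
def IndecModule (M : Type u) [AddCommGroup M] [Module R M] : Prop :=
  Nontrivial M ∧ ∀ A B : Submodule R M, IsCompl A B → A = ⊥ ∨ B = ⊥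

/-- `R` is weakly quasi-Frobenius: left and right coherent and left and right FP-injective. -/
def WQF : Prop :=
  LeftCoherent R ∧ RightCoherent R ∧ FPInjective R R ∧ FPInjective Rᵐᵒᵖ R

/-- `R` is quasi-Frobenius: left and right noetherian and left and right self-injective. -/
def QF : Prop :=
  IsNoetherianRing R ∧ IsNoetherian Rᵐᵒᵖ R ∧ Module.Injective R R ∧ Module.Injective Rᵐᵒᵖ R

end Defs

/-- A group is locally finite if every finitely generated subgroup is finite. -/
def LocallyFiniteGroup (G : Type*) [Group G] : Prop :=
  ∀ H : Subgroup G, H.FG → Finite H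

section ExtPart
open CategoryTheory

theorem extVanish_iff_exact (R : Type u) [Ring R] (F M : Type u) [AddCommGroup F] [Module R F]
    [AddCommGroup M] [Module R M] (P : ProjectiveResolution (ModuleCat.of R F)) :
    ExtVanish R F M ↔ ∀ g : P.complex.X 1 ⟶ ModuleCat.of R M, P.complex.d 2 1 ≫ g = 0 →
      ∃ h : P.complex.X 0 ⟶ ModuleCat.of R M, P.complex.d 1 0 ≫ h = g := by
  unfold ExtVanish
  rw [← ModuleCat.isZero_iff_subsingleton]
  rw [(P.isoExt (R := ℤ) 1 (ModuleCat.of R M)).isZero_iff,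
    ← HomologicalComplex.exactAt_iff_isZero_homology,
    HomologicalComplex.exactAt_iff' _ 0 1 2 (by simp) (by simp),
    ShortComplex.moduleCat_exact_iff]
  rfl

theorem extVanish_of_injective (R : Type u) [Ring R] (F M : Type u) [AddCommGroup F] [Module R F]
    [AddCommGroup M] [Module R M] (hM : Module.Injective R M) : ExtVanish R F M := by
  let P := ProjectiveResolution.of (ModuleCat.of R F)
  rw [extVanish_iff_exact R F M P]
  intro g hg
  have : Injective (ModuleCat.of R M) := Module.injective_object_of_injective_module R M
  have he := P.exact_succ 0
  exact ⟨he.descToInjective g hg, he.comp_descToInjective g hg⟩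

theorem extend_of_extVanish (R : Type u) [Ring R] (M : Type u) 
    [AddCommGroup M] [Module R M] (I : Submodule R R) (h : ExtVanish R (R ⧸ I) M)
    (f : I →ₗ[R] M) : ∃ g : R →ₗ[R] M, ∀ x : I, g x = f x := by
  let P := ProjectiveResolution.of (ModuleCat.of R (R ⧸ I))
  rw [extVanish_iff_exact R _ M P] at h
  let π : P.complex.X 0 ⟶ ModuleCat.of R (R ⧸ I) := P.π.f 0
  let q : ModuleCat.of R R ⟶ ModuleCat.of R (R ⧸ I) := ModuleCat.ofHom I.mkQ
  have hq : Epi q := (ModuleCat.epi_iff_surjective _).2 I.mkQ_surjective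
  let a : P.complex.X 0 ⟶ ModuleCat.of R R := Projective.factorThru π q
  have ha : a ≫ q = π := Projective.factorThru_comp π q
  have ha' : ∀ x, I.mkQ (a.hom x) = π.hom x := fun x => by
    rw [← ha]; rfl
  have hdπ : P.complex.d 1 0 ≫ π = 0 := P.complex_d_comp_π_f_zero
  have hmem : ∀ y : P.complex.X 1, a.hom ((P.complex.d 1 0).hom y) ∈ I := by
    intro y
    rw [← Submodule.Quotient.mk_eq_zero, ← Submodule.mkQ_apply, ha']
    have := congrArg (fun t => t.hom y) hdπ
    exact this
  let b : P.complex.X 1 →ₗ[R] I := LinearMap.codRestrict I (a.hom ∘ₗ (P.complex.d 1 0).hom) hmem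
  obtain ⟨k, hk⟩ := h (ModuleCat.ofHom (f ∘ₗ b)) (by
    ext y
    have : (P.complex.d 1 0).hom ((P.complex.d 2 1).hom y) = 0 := by
      have := congrArg (fun t => t.hom y) (P.complex.d_comp_d 2 1 0)
      exact this
    have hb : b ((P.complex.d 2 1).hom y) = 0 := by
      apply Subtype.ext
      change a.hom ((P.complex.d 1 0).hom ((P.complex.d 2 1).hom y)) = 0
      rw [this, map_zero]
    change f (b ((P.complex.d 2 1).hom y)) = 0
    rw [hb, map_zero])
  have hk' : ∀ y, k.hom ((P.complex.d 1 0).hom y) = f (b y) := fun y =>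
    congrArg (fun t => t.hom y) hk
  have hπs : Function.Surjective π.hom := 
    (ModuleCat.epi_iff_surjective _).1 (inferInstanceAs (Epi (P.π.f 0)))
  obtain ⟨p0, hp0⟩ := hπs (I.mkQ 1)
  have hi0 : (1 : R) - a.hom p0 ∈ I := by
    rw [← Submodule.Quotient.mk_eq_zero, ← Submodule.mkQ_apply, map_sub, ha', hp0, sub_self]
  let i0 : I := ⟨_, hi0⟩
  refine ⟨LinearMap.toSpanSingleton R M (k.hom p0 + f i0), ?_⟩
  rintro ⟨x, hx⟩
  have hxp : π.hom (x • p0) = 0 := by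
    rw [map_smul, hp0, ← map_smul, smul_eq_mul, mul_one]
    exact (Submodule.Quotient.mk_eq_zero I).2 hx
  have hex := P.exact₀
  rw [ShortComplex.moduleCat_exact_iff] at hex
  obtain ⟨y, hy⟩ := hex (x • p0) hxp
  have hy' : (P.complex.d 1 0).hom y = x • p0 := hy
  have h3 : b y + x • i0 = ⟨x, hx⟩ := by
    apply Subtype.ext
    change a.hom ((P.complex.d 1 0).hom y) + x • (1 - a.hom p0) = x
    rw [hy', map_smul]
    simp [mul_sub]
  change x • (k.hom p0 + f i0) = _
  rw [← h3, map_add, map_smul, ← hk', hy', map_smul, smul_add]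

end ExtPart
section PartA

theorem ann_sep {R : Type u} [Ring R] (h2 : LeftFGF R) (I : Submodule R R) (x : R) (hx : x ∉ I) :
    ∃ y, (∀ a ∈ I, a * y = 0) ∧ x * y ≠ 0 := by
  obtain ⟨ι, f, hf⟩ := h2 (R ⧸ I) inferInstance
  have key : ∀ a, f (I.mkQ a) = a • f (I.mkQ 1) := fun a => by
    rw [← map_smul, ← map_smul, smul_eq_mul, mul_one]
  have h0 : f (I.mkQ x) ≠ 0 := by
    intro h
    apply hx
    rw [← Submodule.Quotient.mk_eq_zero, ← Submodule.mkQ_apply]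
    exact hf (by rw [h, map_zero])
  obtain ⟨i, hi⟩ := Finsupp.ne_iff.1 h0
  refine ⟨f (I.mkQ 1) i, fun a ha => ?_, ?_⟩
  · have : f (I.mkQ a) = 0 := by
      rw [Submodule.mkQ_apply, (Submodule.Quotient.mk_eq_zero I).2 ha, map_zero]
    rw [key] at this
    simpa using DFunLike.congr_fun this i
  · rw [key] at hi
    simpa using hi

theorem jacobson_nilp {R : Type u} [Ring R] (h1 : IsNoetherianRing R) (h2 : LeftFGF R) :
    IsNilpotent (Ring.jacobson R) := by
  let J := Ring.jacobson R
  let T : ℕ →o Submodule R R :=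
    { toFun := fun k =>
        { carrier := {y | ∀ a ∈ J ^ k, a * y = 0}
          add_mem' := fun {x y} hx hy a ha => by rw [mul_add, hx a ha, hy a ha, add_zero]
          zero_mem' := fun a _ => mul_zero a
          smul_mem' := fun c x hx a ha => by
            rw [smul_eq_mul, ← mul_assoc]
            exact hx _ (Ideal.mul_mem_right _ _ ha) }
      monotone' := fun m n hmn y hy a ha => hy a (Ideal.pow_le_pow_right hmn ha) }
  obtain ⟨n, hn⟩ := monotone_stabilizes_iff_noetherian.2 h1 T
  refine ⟨n, ?_⟩
  have h3 : J ^ n ≤ J ^ (n + 1) := by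
    intro x hx
    by_contra hx'
    obtain ⟨y, hy, hxy⟩ := ann_sep h2 _ x hx'
    have : y ∈ T n := by rw [hn (n + 1) (by omega)]; exact hy
    exact hxy (this x hx)
  apply Submodule.FG.eq_bot_of_le_jacobson_smul (IsNoetherian.noetherian _)
  rw [Ideal.IsTwoSided.pow_succ] at h3
  exact h3

theorem artinian_of_semisimple {R : Type u} [Ring R] (h1 : IsNoetherianRing R) (h2 : LeftFGF R)
    (h : IsSemisimpleRing (R ⧸ Ring.jacobson R)) : IsArtinianRing R := by
  have : IsSemiprimaryRing R := ⟨h, jacobson_nilp h1 h2⟩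
  exact IsSemiprimaryRing.isNoetherian_iff_isArtinian.mp h1

/-- enough minimal right ideals -/
def EnoughMin (S : Type u) [Ring S] : Prop :=
  ∀ e : S, e * e = e → e ≠ 1 → ∃ x : S, x ≠ 0 ∧ e * x = 0 ∧ ∀ r, x * r ≠ 0 → ∃ s, x * r * s = x

theorem mem_jacobson_of {S : Type u} [Ring S] (x : S) (h : ∀ t, x * t * x = 0) :
    x ∈ Ring.jacobson S := by
  rw [Ring.jacobson_eq_sInf_isMaximal, Submodule.mem_sInf]
  intro M hM
  by_contra hx
  have h1 : (1 : S) ∈ M ⊔ Ideal.span {x} :=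
    (Ideal.isMaximal_iff.1 hM).2 (M ⊔ Ideal.span {x}) x le_sup_left hx
      (Ideal.mem_sup_right (Ideal.mem_span_singleton_self x))
  obtain ⟨r, hr, i, hi⟩ := Submodule.mem_sup.1 h1
  obtain ⟨a, rfl⟩ := Ideal.mem_span_singleton'.1 hi.1
  have : x = x * r := by
    calc x = x * 1 := (mul_one x).symm
      _ = x * r + x * a * x := by rw [← hi.2, mul_add, mul_assoc]
      _ = x * r := by rw [h, add_zero]
  apply hx
  have h5 : x * r ∈ M := Ideal.mul_mem_left M x hr
  rwa [← this] at h5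

theorem exists_idem_min {S : Type u} [Ring S] (hJ : Ring.jacobson S = ⊥) (x : S) (hx : x ≠ 0)
    (hmin : ∀ r, x * r ≠ 0 → ∃ s, x * r * s = x) : ∃ f, f * f = f ∧ f ≠ 0 ∧ ∃ c, f = x * c := by
  have : ∃ t, x * t * x ≠ 0 := by
    by_contra! h
    exact hx (by simpa [hJ] using mem_jacobson_of x h)
  obtain ⟨t, ht⟩ := this
  obtain ⟨s, hs⟩ := hmin (t * x) (by rwa [← mul_assoc])
  have haf : x * t * (x * s * t) = x * t := by
    calc x * t * (x * s * t) = x * (t * x) * s * t := by simp only [mul_assoc]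
      _ = x * t := by rw [hs]
  refine ⟨x * s * t, ?_, ?_, s * t, mul_assoc _ _ _⟩
  · by_contra hne
    have hne' : x * (s * t * (x * s * t) - s * t) ≠ 0 := by
      rw [mul_sub]
      intro h
      apply hne
      rw [sub_eq_zero] at h
      simpa only [mul_assoc] using h
    obtain ⟨r', hr'⟩ := hmin _ hne'
    apply ht
    have : x * t * (x * (s * t * (x * s * t) - s * t)) = 0 := by
      have e1 : x * (s * t * (x * s * t) - s * t) = (x * s * t) * (x * s * t) - x * s * t := by
        simp only [mul_sub, mul_assoc]
      rw [e1, mul_sub, ← mul_assoc, haf, haf, sub_self]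
    calc x * t * x = x * t * (x * (s * t * (x * s * t) - s * t) * r') := by rw [hr']
      _ = 0 := by rw [← mul_assoc, this, zero_mul]
  · intro h
    rw [h, mul_zero] at haf
    exact ht (by rw [← haf, zero_mul])

theorem semisimple_of_enoughMin {S : Type u} [Ring S] [IsNoetherianRing S]
    (hJ : Ring.jacobson S = ⊥) (hP : EnoughMin S) : IsSemisimpleRing S := by
  let soc : Submodule Sᵐᵒᵖ S := socle Sᵐᵒᵖ S
  let A : Set (Submodule S S) := {I | ∃ e, e * e = e ∧ e ∈ soc ∧ I = Ideal.span {e}}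
  obtain ⟨I, ⟨e, he, hes, rfl⟩, hmax⟩ := set_has_maximal_iff_noetherian.2 ‹IsNoetherianRing S› A
    ⟨_, 0, by simp, zero_mem _, rfl⟩
  have h1 : e = 1 := by
    by_contra hne
    obtain ⟨x, hx, hex, hmin⟩ := hP e he hne
    obtain ⟨f, hff, hf0, c, hfc⟩ := exists_idem_min hJ x hx hmin
    have hef : e * f = 0 := by rw [hfc, ← mul_assoc, hex, zero_mul]
    have hxsoc : x ∈ soc := by
      have hs : IsSimpleModule Sᵐᵒᵖ (Submodule.span Sᵐᵒᵖ {x}) := by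
        have : Nontrivial (Submodule.span Sᵐᵒᵖ {x}) := by
          rw [Submodule.nontrivial_iff_ne_bot]
          simpa using hx
        rw [isSimpleModule_iff_toSpanSingleton_surjective]
        refine ⟨this, ?_⟩
        rintro ⟨y, hy⟩ hy0 ⟨z, hz⟩
        obtain ⟨r, rfl⟩ := Submodule.mem_span_singleton.1 hy
        obtain ⟨r', rfl⟩ := Submodule.mem_span_singleton.1 hz
        obtain ⟨s, hs⟩ := hmin r.unop (by
          intro h
          exact hy0 (Subtype.ext h))
        refine ⟨op (s * r'.unop), Subtype.ext ?_⟩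
        change x * r.unop * (s * r'.unop) = x * r'.unop
        rw [← mul_assoc, hs]
      exact le_sSup (a := Submodule.span Sᵐᵒᵖ {x}) hs (Submodule.mem_span_singleton_self x)
    have hr : ∀ y ∈ soc, ∀ t, y * t ∈ soc := fun y hy t => soc.smul_mem (op t) hy
    have hfs : f ∈ soc := hfc ▸ hr x hxsoc c
    let f' := f - f * e
    have hfs2 : f' ∈ soc := sub_mem hfs (hr f hfs e)
    have hfe2 : f' * e = 0 := by simp only [f', sub_mul, mul_assoc, he, sub_self]
    have hef2 : e * f' = 0 := by simp only [f', mul_sub, ← mul_assoc, hef, zero_mul, sub_self]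
    have hff2 : f' * f' = f' := by
      have : f * e * f = 0 := by rw [mul_assoc, hef, mul_zero]
      simp only [f', mul_sub, sub_mul, hff, this, ← mul_assoc]; simp
    have hf'0 : f' ≠ 0 := by
      intro h
      apply hf0
      have : f' * f = f := by simp only [f', sub_mul, hff, mul_assoc, hef, mul_zero, sub_zero]
      rw [← this, h, zero_mul]
    apply hmax (Ideal.span {e + f'}) ⟨e + f', by
      simp only [mul_add, add_mul, he, hfe2, hef2, hff2, add_zero, zero_add], add_mem hes hfs2, rfl⟩
    refine lt_of_le_of_ne ?_ ?_
    · rw [Ideal.span_singleton_le_iff_mem, Ideal.mem_span_singleton']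
      exact ⟨e, by rw [mul_add, he, hef2, add_zero]⟩
    · intro h
      have : e + f' ∈ Ideal.span {e} := h ▸ Ideal.mem_span_singleton_self _
      obtain ⟨a, ha⟩ := Ideal.mem_span_singleton'.1 this
      have h6 : (e + f') * e = e + f' := by rw [← ha, mul_assoc, he]
      rw [add_mul, he, hfe2, add_zero] at h6
      exact hf'0 (by simpa using h6.symm)
  have htop : soc = ⊤ := by
    rw [eq_top_iff]
    intro x _
    have := soc.smul_mem (op x) (h1 ▸ hes)
    simpa using this
  have hss : IsSemisimpleModule Sᵐᵒᵖ S := IsSemisimpleModule.of_sSup_simples_eq_top htop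
  rw [← isSemisimpleRing_mulOpposite_iff]
  let E : S ≃ₗ[Sᵐᵒᵖ] Sᵐᵒᵖ :=
    { toFun := op, invFun := unop, left_inv := fun _ => rfl, right_inv := fun _ => rfl
      map_add' := fun _ _ => rfl, map_smul' := fun _ _ => rfl }
  exact IsSemisimpleModule.congr E.symm

end PartA
section PartB

theorem enoughMin_of_filtration {R : Type u} [Ring R] (h1 : IsNoetherianRing R)
    (φ : R → Submodule R R) (hmono : ∀ x r, φ x ≤ φ (x * r))
    (hφ : ∀ x r, (∀ r', x * r' ∉ Ring.jacobson R → φ (x * r') ≤ φ x) → x * r ∉ Ring.jacobson R →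
      ∃ s, x - x * r * s ∈ Ring.jacobson R) : EnoughMin (R ⧸ Ring.jacobson R) := by
  intro e he hne
  obtain ⟨e, rfl⟩ := Ideal.Quotient.mk_surjective e
  let mk := Ideal.Quotient.mk (Ring.jacobson R)
  let A : Set (Submodule R R) := {I | ∃ x, x ∉ Ring.jacobson R ∧ mk e * mk x = 0 ∧ I = φ x}
  have hA : A.Nonempty := by
    refine ⟨_, 1 - e, ?_, ?_, rfl⟩
    · intro h
      apply hne
      have := (Ideal.Quotient.eq_zero_iff_mem).2 h
      rw [map_sub, sub_eq_zero, map_one] at this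
      exact this.symm
    · rw [map_sub, map_one, mul_sub, mul_one]
      exact sub_eq_zero.2 he.symm
  obtain ⟨I, ⟨x, hx, hex, rfl⟩, hmax⟩ := set_has_maximal_iff_noetherian.2 h1 A hA
  have hx' : ∀ r', x * r' ∉ Ring.jacobson R → φ (x * r') ≤ φ x := by
    intro r' hr'
    have h3 := hmax (φ (x * r')) ⟨_, hr', by rw [map_mul, ← mul_assoc, hex, zero_mul], rfl⟩
    by_contra h4
    exact h3 (lt_of_le_not_ge (hmono x r') h4)
  refine ⟨mk x, fun h => hx (Ideal.Quotient.eq_zero_iff_mem.1 h), hex, ?_⟩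
  intro r hr
  obtain ⟨r, rfl⟩ := Ideal.Quotient.mk_surjective r
  obtain ⟨s, hs⟩ := hφ x r hx' (fun h => hr (by
    have := Ideal.Quotient.eq_zero_iff_mem.2 h
    rwa [map_mul] at this))
  refine ⟨mk s, ?_⟩
  have := Ideal.Quotient.eq_zero_iff_mem.2 hs
  rw [map_sub, map_mul, map_mul, sub_eq_zero] at this
  exact this.symm

theorem artinian_of_enoughMin {R : Type u} [Ring R] (h1 : IsNoetherianRing R) (h2 : LeftFGF R)
    (h : EnoughMin (R ⧸ Ring.jacobson R)) : IsArtinianRing R :=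
  have := isNoetherianRing_of_surjective R (R ⧸ Ring.jacobson R) (Ideal.Quotient.mk _)
    Ideal.Quotient.mk_surjective
  artinian_of_semisimple h1 h2
    (semisimple_of_enoughMin (Ring.jacobson_quotient_jacobson R) h)

theorem artinian_of_semiregular {R : Type u} [Ring R] (h1 : IsNoetherianRing R) (h2 : LeftFGF R)
    (h : Semiregular R) : IsArtinianRing R := by
  apply artinian_of_enoughMin h1 h2
  have h' : ∀ a : R, ∃ x : R, a - a * x * a ∈ Ring.jacobson R := by
    intro a
    have := h a
    rwa [Ideal.jacobson_bot] at this
  refine enoughMin_of_filtration h1 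
    (fun x => Submodule.comap (LinearMap.toSpanSingleton R R x) (Ring.jacobson R)) ?_ ?_
  · intro x r a ha
    change a * (x * r) ∈ Ring.jacobson R
    rw [← mul_assoc]
    exact Ideal.mul_mem_right _ _ ha
  · intro x r hx hr
    have h3 := hx r hr
    obtain ⟨y, hy⟩ := h' (x * r)
    refine ⟨y * x, ?_⟩
    have : (1 - x * r * y) * (x * r) ∈ Ring.jacobson R := by rwa [sub_mul, one_mul]
    have h4 : (1 - x * r * y) * x ∈ Ring.jacobson R := h3 this
    rwa [sub_mul, one_mul, mul_assoc (x * r)] at h4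

theorem mem_right_of_ann {R : Type u} [Ring R] (hinj : Module.Injective R R) (x y : R)
    (h : ∀ a, a * x = 0 → a * y = 0) : ∃ s, y = x * s := by
  have hl : LinearMap.ker (LinearMap.toSpanSingleton R R x) ≤
    LinearMap.ker (LinearMap.toSpanSingleton R R y) := fun a ha => h a ha
  let g : (R ⧸ LinearMap.ker (LinearMap.toSpanSingleton R R x)) →ₗ[R] R :=
    Submodule.liftQ _ (LinearMap.toSpanSingleton R R y) hl
  let i : (R ⧸ LinearMap.ker (LinearMap.toSpanSingleton R R x)) →ₗ[R] R :=
    Submodule.liftQ _ (LinearMap.toSpanSingleton R R x) le_rfl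
  have hi : Function.Injective i := by
    rw [← LinearMap.ker_eq_bot]
    exact Submodule.ker_liftQ_eq_bot _ _ _ le_rfl
  obtain ⟨k, hk⟩ := hinj.out i hi g
  refine ⟨k 1, ?_⟩
  have h3 := hk (Submodule.Quotient.mk 1)
  simp only [i, g, Submodule.liftQ_apply, LinearMap.toSpanSingleton_apply, one_smul] at h3
  rw [← h3, ← smul_eq_mul, ← map_smul, smul_eq_mul, mul_one]

theorem artinian_of_injective {R : Type u} [Ring R] (h1 : IsNoetherianRing R) (h2 : LeftFGF R)
    (h : Module.Injective R R) : IsArtinianRing R := by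
  apply artinian_of_enoughMin h1 h2
  refine enoughMin_of_filtration h1 
    (fun x => LinearMap.ker (LinearMap.toSpanSingleton R R x)) ?_ ?_
  · intro x r a ha
    change a * (x * r) = 0
    rw [← mul_assoc]
    have : a * x = 0 := ha
    rw [this, zero_mul]
  · intro x r hx hr
    have h3 := hx r hr
    obtain ⟨s, hs⟩ := mem_right_of_ann h (x * r) x (fun a ha => h3 ha)
    exact ⟨s, by rw [← hs, sub_self]; exact zero_mem _⟩

theorem artinian_of_simple_quot {R : Type u} [Ring R] (h1 : IsNoetherianRing R)
    (h : ∀ I : Submodule R R, I ≠ ⊤ → ∃ T : Submodule R (R ⧸ I), IsSimpleModule R T) :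
    IsArtinianRing R := by
  obtain ⟨N, hN, hmax⟩ := set_has_maximal_iff_noetherian.2 h1
    {N : Submodule R R | IsArtinian R N} ⟨⊥, inferInstanceAs (IsArtinian R (⊥ : Submodule R R))⟩
  have hN : IsArtinian R N := hN
  by_cases hT : N = ⊤
  · subst hT
    exact Submodule.topEquiv.isArtinian_iff.1 hN
  · exfalso
    obtain ⟨T, hT⟩ := h N hT
    let N' := Submodule.comap N.mkQ T
    have hle : N ≤ N' := by
      intro x hx
      change N.mkQ x ∈ T
      rw [Submodule.mkQ_apply, (Submodule.Quotient.mk_eq_zero N).2 hx]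
      exact zero_mem _
    let p : N' →ₗ[R] T := (N.mkQ ∘ₗ N'.subtype).codRestrict T (fun x => x.2)
    have hex : Function.Exact (Submodule.inclusion hle) p := by
      intro x
      constructor
      · intro hx
        have : N.mkQ x.1 = 0 := congrArg Subtype.val hx
        exact ⟨⟨x.1, (Submodule.Quotient.mk_eq_zero N).1 this⟩, rfl⟩
      · rintro ⟨y, rfl⟩
        exact Subtype.ext ((Submodule.Quotient.mk_eq_zero N).2 y.2)
    have hart : IsArtinian R N' := isArtinian_of_range_eq_ker (Submodule.inclusion hle) p 
      (LinearMap.exact_iff.1 hex).symm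
    refine hmax N' hart (lt_of_le_of_ne hle ?_)
    intro heq
    have hb : T ≠ ⊥ := by
      rw [← Submodule.nontrivial_iff_ne_bot]; exact hT.nontrivial
    apply hb
    rw [eq_bot_iff]
    intro t ht
    obtain ⟨x, rfl⟩ := N.mkQ_surjective t
    have : x ∈ N' := ht
    rw [← heq] at this
    exact (Submodule.Quotient.mk_eq_zero N).2 this

theorem exists_simple_of_socle {R : Type u} [Ring R] {M : Type u} [AddCommGroup M] [Module R M]
    (h : socle R M ≠ ⊥) : ∃ T : Submodule R M, IsSimpleModule R T := by
  by_contra! hc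
  apply h
  unfold socle
  rw [sSup_eq_bot]
  intro T hT
  exact absurd hT (hc T)

theorem artinian_of_semiartinian {R : Type u} [Ring R] (h1 : IsNoetherianRing R)
    (h : LeftSemiartinian R) : IsArtinianRing R := by
  refine artinian_of_simple_quot h1 fun I hI => ?_
  apply exists_simple_of_socle
  apply h
  · refine ⟨I.mkQ 1, ?_⟩
    rw [eq_top_iff]
    intro x _
    obtain ⟨x, rfl⟩ := I.mkQ_surjective x
    rw [Submodule.mem_span_singleton]
    exact ⟨x, by rw [← map_smul, smul_eq_mul, mul_one]⟩
  · exact Submodule.Quotient.nontrivial_iff.2 hI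

/-- if each nonzero left ideal contains a simple one, every nonzero f.g. module does. -/
theorem exists_simple_of_fg {R : Type u} [Ring R] (h2 : LeftFGF R)
    (h : ∀ P : Submodule R R, P ≠ ⊥ → ∃ T : Submodule R R, T ≤ P ∧ IsSimpleModule R T)
    (M : Type u) [AddCommGroup M] [Module R M] [Module.Finite R M] [Nontrivial M] :
    ∃ T : Submodule R M, IsSimpleModule R T := by
  obtain ⟨ι, f, hf⟩ := h2 M inferInstance
  -- choose a nonzero submodule with minimal number of nonzero coordinates
  let Q : ℕ → Prop := fun n => ∃ m : M, m ≠ 0 ∧ (f m).support.card = n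
  have hQ : ∃ n, Q n := by
    obtain ⟨m, hm⟩ := exists_ne (0 : M)
    exact ⟨_, m, hm, rfl⟩
  classical
  obtain ⟨m, hm, hmc⟩ := Nat.find_spec hQ
  have hmin : ∀ m' : M, m' ≠ 0 → (f m).support.card ≤ (f m').support.card := fun m' hm' => by
    rw [hmc]; exact Nat.find_min' hQ ⟨m', hm', rfl⟩
  have hfm : f m ≠ 0 := fun h0 => hm (hf (by rw [h0, map_zero]))
  obtain ⟨i, hi⟩ := Finsupp.ne_iff.1 hfm
  let N : Submodule R M := Submodule.span R {m}
  let g : N →ₗ[R] R := (Finsupp.lapply i) ∘ₗ f ∘ₗ N.subtype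
  have hg : Function.Injective g := by
    rw [← LinearMap.ker_eq_bot, eq_bot_iff]
    rintro ⟨y, hy⟩ hy0
    obtain ⟨r, rfl⟩ := Submodule.mem_span_singleton.1 hy
    have hy0 : f (r • m) i = 0 := hy0
    by_contra hne
    have h4 : r • m ≠ 0 := fun h => hne (Subtype.ext h)
    have h5 := hmin _ h4
    have h6 : (f (r • m)).support ⊂ (f m).support := by
      rw [Finset.ssubset_iff_of_subset]
      · exact ⟨i, by simpa using hi, by simpa using hy0⟩
      · rw [map_smul]; exact Finsupp.support_smul
    have := Finset.card_lt_card h6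
    omega
  have hr : LinearMap.range g ≠ ⊥ := by
    intro hb
    have : g ⟨m, Submodule.mem_span_singleton_self m⟩ = 0 := by
      have : g ⟨m, Submodule.mem_span_singleton_self m⟩ ∈ LinearMap.range g := ⟨_, rfl⟩
      rw [hb] at this
      simpa using this
    exact hi this
  obtain ⟨T, hT, hTs⟩ := h _ hr
  let e1 : N ≃ₗ[R] LinearMap.range g := LinearEquiv.ofInjective g hg
  let k : T →ₗ[R] M := N.subtype ∘ₗ e1.symm.toLinearMap ∘ₗ Submodule.inclusion hT
  have hk : Function.Injective k := by
    refine N.injective_subtype.comp (e1.symm.injective.comp (Submodule.inclusion_injective hT))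
  exact ⟨LinearMap.range k, IsSimpleModule.congr (LinearEquiv.ofInjective k hk).symm⟩

theorem artinian_of_essential {R : Type u} [Ring R] (h1 : IsNoetherianRing R) (h2 : LeftFGF R)
    (h : EssentialSub R (socle R R)) : IsArtinianRing R := by
  refine artinian_of_simple_quot h1 fun I hI => ?_
  have : Nontrivial (R ⧸ I) := Submodule.Quotient.nontrivial_iff.2 hI
  refine exists_simple_of_fg h2 ?_ _
  intro P hP
  have h3 := h P hP
  have hs : IsSemisimpleModule R (socle R R) := by
    unfold socle
    rw [sSup_eq_iSup]
    exact isSemisimpleModule_biSup_of_isSemisimpleModule_submodule (fun i hi => by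
      have : IsSimpleModule R i := hi
      infer_instance)
  have hs' : IsSemisimpleModule R (socle R R ⊓ P : Submodule R R) := 
    IsSemisimpleModule.of_injective (Submodule.inclusion inf_le_left)
      (Submodule.inclusion_injective _)
  have : Nontrivial (socle R R ⊓ P : Submodule R R) := Submodule.nontrivial_iff_ne_bot.2 h3
  obtain ⟨T, hT⟩ := IsSemisimpleModule.exists_simple_submodule R (socle R R ⊓ P : Submodule R R)
  refine ⟨T.map (Submodule.subtype _), ?_, ?_⟩
  · exact (Submodule.map_subtype_le _ _).trans inf_le_right
  · exact IsSimpleModule.congr (Submodule.equivSubtypeMap _ T).symm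

end PartB
section PartC

theorem artinian_of_right_semiartinian {R : Type u} [Ring R] (h1 : IsNoetherianRing R)
    (h2 : LeftFGF R) (h : LeftSemiartinian Rᵐᵒᵖ) : IsArtinianRing R := by
  apply artinian_of_enoughMin h1 h2
  intro e he hne
  let mk := Ideal.Quotient.mk (Ring.jacobson R)
  let K : Submodule Rᵐᵒᵖ R :=
    { carrier := {y | e * mk y = mk y}
      add_mem' := fun {a b} ha hb => by
        change e * mk (a + b) = mk (a + b)
        rw [map_add, mul_add]; exact congrArg₂ _ ha hb
      zero_mem' := by
        change e * mk 0 = mk 0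
        rw [map_zero, mul_zero]
      smul_mem' := fun c x hx => by
        change e * mk (x * c.unop) = mk (x * c.unop)
        rw [map_mul, ← mul_assoc]
        exact congrArg (· * _) hx }
  have hK : ∀ y, y ∈ K ↔ e * mk y = mk y := fun y => Iff.rfl
  have hK1 : K ≠ ⊤ := by
    intro hK'
    have : (1 : R) ∈ K := hK' ▸ trivial
    rw [hK, map_one, mul_one] at this
    exact hne this
  obtain ⟨T, hT⟩ := exists_simple_of_socle (h (R ⧸ K) (by
    refine ⟨K.mkQ 1, ?_⟩
    rw [eq_top_iff]
    intro x _
    obtain ⟨x, rfl⟩ := K.mkQ_surjective x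
    rw [Submodule.mem_span_singleton]
    exact ⟨op x, by rw [← map_smul]; simp⟩) (Submodule.Quotient.nontrivial_iff.2 hK1))
  have hTn := hT.nontrivial
  obtain ⟨⟨t, ht⟩, ht0⟩ := exists_ne (0 : T)
  obtain ⟨y, rfl⟩ := K.mkQ_surjective t
  have hker : ∀ z, z ∈ K ↔ (1 - e) * mk z = 0 := by
    intro z
    rw [hK, sub_mul, one_mul, sub_eq_zero, eq_comm]
  refine ⟨(1 - e) * mk y, ?_, ?_, ?_⟩
  · rw [ne_eq, ← hker]
    intro hy
    exact ht0 (Subtype.ext ((Submodule.Quotient.mk_eq_zero K).2 hy))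
  · rw [← mul_assoc, mul_sub, mul_one, he, sub_self, zero_mul]
  · intro r hr
    obtain ⟨r, rfl⟩ := Ideal.Quotient.mk_surjective r
    rw [mul_assoc, ← map_mul, ne_eq, ← hker] at hr
    let v : T := ⟨K.mkQ (y * r), T.smul_mem (op r) ht⟩
    have hv : v ≠ 0 := fun h0 => hr ((Submodule.Quotient.mk_eq_zero K).1 (congrArg Subtype.val h0))
    obtain ⟨s, hs⟩ := (isSimpleModule_iff_toSpanSingleton_surjective.1 hT).2 v hv ⟨K.mkQ y, ht⟩
    refine ⟨mk s.unop, ?_⟩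
    have h3 : K.mkQ (y * r * s.unop) = K.mkQ y := congrArg Subtype.val hs
    rw [← sub_eq_zero, ← map_sub] at h3
    have h4 := (Submodule.Quotient.mk_eq_zero K).1 h3
    rw [hker, map_sub, mul_sub, sub_eq_zero, map_mul, map_mul] at h4
    calc _ = (1 - e) * (mk y * mk r * mk s.unop) := by simp only [mul_assoc, mk]
      _ = _ := h4

theorem mem_jacobson_of_right {R : Type u} [Ring R] (x : R)
    (h : ∀ K : Submodule Rᵐᵒᵖ R, IsCoatom K → x ∈ K) : x ∈ Ring.jacobson R := by
  have hfin : Module.Finite Rᵐᵒᵖ R := 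
    ⟨⟨{1}, by
      rw [eq_top_iff]
      intro y _
      rw [Finset.coe_singleton, Submodule.mem_span_singleton]
      exact ⟨op y, by simp⟩⟩⟩
  have h3 : ∀ r, ∃ s, (1 - x * r) * s = 1 := by
    intro r
    rcases eq_top_or_exists_le_coatom (Submodule.span Rᵐᵒᵖ {1 - x * r}) with ht | ⟨K, hK, hle⟩
    · have : (1 : R) ∈ Submodule.span Rᵐᵒᵖ {1 - x * r} := ht ▸ trivial
      obtain ⟨s, hs⟩ := Submodule.mem_span_singleton.1 this
      exact ⟨s.unop, hs⟩
    · exfalso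
      have h4 : 1 - x * r ∈ K := hle (Submodule.mem_span_singleton_self _)
      have h5 : x * r ∈ K := K.smul_mem (op r) (h K hK)
      have h6 : (1 : R) ∈ K := by simpa using add_mem h4 h5
      apply hK.1
      rw [eq_top_iff]
      intro y _
      simpa using K.smul_mem (op y) h6
  have h4 : ∀ r, ∃ s, s * (1 - x * r) = 1 := by
    intro r
    obtain ⟨s, hs⟩ := h3 r
    obtain ⟨t, ht⟩ := h3 (-(r * s))
    have e1 : 1 - x * -(r * s) = s := by
      rw [sub_mul, one_mul, sub_eq_iff_eq_add] at hs
      rw [mul_neg, sub_neg_eq_add, ← mul_assoc, ← hs]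
    rw [e1] at ht
    have : t = 1 - x * r := by
      calc t = ((1 - x * r) * s) * t := by rw [hs, one_mul]
        _ = 1 - x * r := by rw [mul_assoc, ht, mul_one]
    exact ⟨s, this ▸ ht⟩
  rw [Ring.jacobson_eq_sInf_isMaximal, Submodule.mem_sInf]
  intro M hM
  by_contra hx
  have h1 : (1 : R) ∈ M ⊔ Ideal.span {x} :=
    (Ideal.isMaximal_iff.1 hM).2 (M ⊔ Ideal.span {x}) x le_sup_left hx
      (Ideal.mem_sup_right (Ideal.mem_span_singleton_self x))
  obtain ⟨m, hm, i, hi⟩ := Submodule.mem_sup.1 h1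
  obtain ⟨r, rfl⟩ := Ideal.mem_span_singleton'.1 hi.1
  have hm' : m = 1 - r * x := by rw [← hi.2]; simp
  obtain ⟨s, hs⟩ := h4 r
  have : (1 + r * s * x) * m = 1 := by
    have : (1 + r * s * x) * (1 - r * x) = 1 - r * x + r * (s * (1 - x * r)) * x := by noncomm_ring
    rw [hm', this, hs]
    simp
  exact (Ideal.isMaximal_iff.1 hM).1 (this ▸ Ideal.mul_mem_left M _ hm)

theorem artinian_of_kasch {R : Type u} [Ring R] (h1 : IsNoetherianRing R)
    (h2 : LeftFGF R) (h : RightKasch R) : IsArtinianRing R := by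
  have hk : ∀ K : Submodule Rᵐᵒᵖ R, IsCoatom K → ∃ a : R, (∀ y ∈ K, a * y = 0) ∧ 
      ∀ y, a * y = 0 → y ∈ K := by
    intro K hK
    obtain ⟨f, hf⟩ := h (R ⧸ K) (by
      refine ⟨K.mkQ 1, ?_⟩
      rw [eq_top_iff]
      intro x _
      obtain ⟨x, rfl⟩ := K.mkQ_surjective x
      rw [Submodule.mem_span_singleton]
      exact ⟨op x, by rw [← map_smul]; simp⟩) (Submodule.Quotient.nontrivial_iff.2 hK.1)
    have hfy : ∀ y, f (K.mkQ y) = f (K.mkQ 1) * y := by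
      intro y
      have : K.mkQ y = op y • K.mkQ 1 := by rw [← map_smul]; simp
      rw [this, map_smul]; rfl
    refine ⟨f (K.mkQ 1), ?_, ?_⟩
    · intro y hy
      rw [← hfy, Submodule.mkQ_apply, (Submodule.Quotient.mk_eq_zero K).2 hy, map_zero]
    · intro y hy
      have hle : K ≤ LinearMap.ker (f ∘ₗ K.mkQ) := by
        intro z hz
        change f (K.mkQ z) = 0
        rw [Submodule.mkQ_apply, (Submodule.Quotient.mk_eq_zero K).2 hz, map_zero]
      rcases hK.le_iff.1 hle with h4 | h4
      · exfalso
        apply hf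
        refine LinearMap.ext fun z => ?_
        obtain ⟨z, rfl⟩ := K.mkQ_surjective z
        have : z ∈ LinearMap.ker (f ∘ₗ K.mkQ) := h4 ▸ trivial
        exact this
      · rw [← h4]
        change f (K.mkQ y) = 0
        rw [hfy, hy]
  apply artinian_of_enoughMin h1 h2
  refine enoughMin_of_filtration h1 (fun x => Submodule.span R
    {a | ∃ K : Submodule Rᵐᵒᵖ R, IsCoatom K ∧ x ∈ K ∧ ∀ y ∈ K, a * y = 0}) ?_ ?_
  · intro x r
    apply Submodule.span_mono
    rintro a ⟨K, hK, hx, ha⟩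
    exact ⟨K, hK, K.smul_mem (op r) hx, ha⟩
  · intro x r hx hr
    have : ∃ K : Submodule Rᵐᵒᵖ R, IsCoatom K ∧ x * r ∉ K := by
      by_contra! hc
      exact hr (mem_jacobson_of_right _ hc)
    obtain ⟨K, hK, hxr⟩ := this
    obtain ⟨a, haK, haK'⟩ := hk K hK
    have : x ∈ K ⊔ Submodule.span Rᵐᵒᵖ {x * r} := by
      have : K ⊔ Submodule.span Rᵐᵒᵖ {x * r} = ⊤ := by
        apply hK.2
        refine lt_of_le_of_ne le_sup_left ?_
        intro heq
        apply hxr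
        rw [heq]
        exact Submodule.mem_sup_right (Submodule.mem_span_singleton_self _)
      rw [this]; trivial
    obtain ⟨k, hkK, z, hz, hkz⟩ := Submodule.mem_sup.1 this
    obtain ⟨s, rfl⟩ := Submodule.mem_span_singleton.1 hz
    refine ⟨s.unop, ?_⟩
    by_contra hJ
    have e1 : x * (1 - r * s.unop) = x - x * r * s.unop := by
      rw [mul_sub, mul_one, mul_assoc]
    rw [← e1] at hJ
    have hle := hx _ hJ
    have hmem : x * (1 - r * s.unop) ∈ K := by
      rw [e1]
      have : x - x * r * s.unop = k := by
        rw [sub_eq_iff_eq_add]; exact hkz.symm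
      rwa [this]
    have ha := hle (Submodule.subset_span ⟨K, hK, hmem, haK⟩)
    have hax : a * x = 0 := by
      have : Submodule.span R {a | ∃ K : Submodule Rᵐᵒᵖ R, IsCoatom K ∧ x ∈ K ∧ 
          ∀ y ∈ K, a * y = 0} ≤ LinearMap.ker (LinearMap.toSpanSingleton R R x) := by
        rw [Submodule.span_le]
        rintro b ⟨K', _, hxK, hb⟩
        exact hb x hxK
      exact this ha
    exact hxr (K.smul_mem (op r) (haK' x hax))

end PartC

theorem inj_of_split {R : Type u} [Ring R] (A : Type u) [AddCommGroup A] [Module R A]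
    [Module.Finite R A]
    (h : ∀ (M : Type u) [AddCommGroup M] [Module R M] [Module.Finite R M] (i : A →ₗ[R] M),
      Function.Injective i → ∃ r : M →ₗ[R] A, ∀ a, r (i a) = a) : Module.Injective R A := by
  rw [← Module.Baer.iff_injective]
  intro I f
  let G : Submodule R (A × R) := LinearMap.range (LinearMap.prod f (-(Submodule.subtype I)))
  have hG : ∀ i : I, ((f i, -(i : R)) : A × R) ∈ G := fun i => ⟨i, rfl⟩
  obtain ⟨r, hr⟩ := h ((A × R) ⧸ G) (G.mkQ ∘ₗ LinearMap.inl R A R) (by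
    rw [← LinearMap.ker_eq_bot, LinearMap.ker_eq_bot']
    intro a ha
    obtain ⟨i, hi⟩ := (Submodule.Quotient.mk_eq_zero G).1 ha
    have h1 : f i = a := congrArg Prod.fst hi
    have h2 : -(i : R) = 0 := congrArg Prod.snd hi
    have h3 : i = 0 := Subtype.ext (by simpa using h2)
    rw [← h1, h3, map_zero])
  refine ⟨r ∘ₗ G.mkQ ∘ₗ LinearMap.inr R A R, fun x hx => ?_⟩
  rw [← hr (f ⟨x, hx⟩)]
  simp only [LinearMap.comp_apply]
  congr 1
  symm
  rw [← sub_eq_zero, ← map_sub]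
  refine (Submodule.Quotient.mk_eq_zero G).2 ?_
  have := hG ⟨x, hx⟩
  simpa using this

/-- `A` has a smallest nonzero submodule, isomorphic to `S`. -/
def UnifOver (R : Type u) [Ring R] (S A : Type u) [AddCommGroup S] [Module R S]
    [AddCommGroup A] [Module R A] : Prop :=
  ∃ T : Submodule R A, Nonempty (T ≃ₗ[R] S) ∧ ∀ B : Submodule R A, B ≠ ⊥ → T ≤ B

theorem UnifOver.congr {R : Type u} [Ring R] {S A A' : Type u} [AddCommGroup S] [Module R S]
    [AddCommGroup A] [Module R A] [AddCommGroup A'] [Module R A'] (h : UnifOver R S A)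
    (e : A ≃ₗ[R] A') : UnifOver R S A' := by
  obtain ⟨T, ⟨t⟩, hT⟩ := h
  refine ⟨T.map (e : A →ₗ[R] A'), ⟨(e.submoduleMap T).symm.trans t⟩, fun B hB => ?_⟩
  rw [Submodule.map_le_iff_le_comap]
  apply hT
  intro h0
  apply hB
  rw [eq_bot_iff]
  intro b hb
  have : e.symm b ∈ B.comap (e : A →ₗ[R] A') := by simpa using hb
  rw [h0] at this
  simpa using this

theorem UnifOver.inj {R : Type u} [Ring R] {S A A' : Type u} [AddCommGroup S] [Module R S]
    [Nontrivial S]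
    [AddCommGroup A] [Module R A] [AddCommGroup A'] [Module R A'] (h : UnifOver R S A) :
    ∃ t : A, t ≠ 0 ∧ ∀ f : A →ₗ[R] A', f t ≠ 0 → Function.Injective f := by
  obtain ⟨T, ⟨e⟩, hT⟩ := h
  have : Nontrivial T := e.toEquiv.nontrivial
  obtain ⟨t, ht⟩ := exists_ne (0 : T)
  refine ⟨t, by simpa using ht, fun f hf => ?_⟩
  rw [← LinearMap.ker_eq_bot]
  by_contra hk
  exact hf (hT _ hk t.2)

theorem embed_unif {R : Type u} [Ring R] (h2 : LeftFGF R) {S M : Type u} [AddCommGroup S]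
    [Module R S] [Nontrivial S] [AddCommGroup M] [Module R M] [Module.Finite R M]
    (h : UnifOver R S M) : ∃ A : Submodule R R, Nonempty (M ≃ₗ[R] A) := by
  obtain ⟨ι, f, hf⟩ := h2 M inferInstance
  obtain ⟨t, ht, h3⟩ := h.inj (A' := R)
  have : f t ≠ 0 := fun h0 => ht (hf (by rw [h0, map_zero]))
  obtain ⟨i, hi⟩ := Finsupp.ne_iff.1 this
  exact ⟨_, ⟨LinearEquiv.ofInjective (Finsupp.lapply i ∘ₗ f) (h3 _ hi)⟩⟩

theorem unifOver_self {R : Type u} [Ring R] (S : Type u) [AddCommGroup S]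
    [Module R S] [IsSimpleModule R S] : UnifOver R S S :=
  ⟨⊤, ⟨Submodule.topEquiv⟩, fun B hB => ((eq_bot_or_eq_top B).resolve_left hB).ge⟩

theorem exists_hull {R : Type u} [Ring R] (h1 : IsNoetherianRing R) (h2 : LeftFGF R)
    (ha : IsArtinianRing R) (S : Type u) [AddCommGroup S] [Module R S] [IsSimpleModule R S] :
    ∃ E : Submodule R R, UnifOver R S E ∧ Module.Injective R E := by
  have : Nontrivial S := IsSimpleModule.nontrivial R S
  let C : Set (Submodule R R) := {A | UnifOver R S A}
  have hfinS : Module.Finite R S := inferInstance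
  have hC : C.Nonempty := by
    obtain ⟨A, ⟨e⟩⟩ := embed_unif h2 (unifOver_self (R := R) S)
    exact ⟨A, (unifOver_self (R := R) S).congr e⟩
  have hwf : WellFounded (InvImage (· < ·) fun A : Submodule R R =>
    (Module.length R R).toNat - (Module.length R A).toNat) := InvImage.wf _ Nat.lt_wfRel.wf
  obtain ⟨A, hA, hmax⟩ := hwf.has_min C hC
  have hmax' : ∀ B ∈ C, Module.length R B ≤ Module.length R A := by
    intro B hB
    have h3 := hmax B hB
    have hb : ∀ D : Submodule R R, Module.length R D ≤ Module.length R R := fun D =>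
      Module.length_le_of_injective D.subtype D.subtype_injective
    have hR : Module.length R R ≠ ⊤ := Module.length_ne_top
    have hAt : Module.length R A ≠ ⊤ := Module.length_ne_top
    have hBt : Module.length R B ≠ ⊤ := Module.length_ne_top
    have hbA := hb A
    have hbB := hb B
    change ¬ (_ < _) at h3
    lift Module.length R R to ℕ using hR with n
    lift Module.length R A to ℕ using hAt with a
    lift Module.length R B to ℕ using hBt with b
    simp only [ENat.toNat_coe, Nat.cast_le] at h3 hbA hbB ⊢
    omega
  refine ⟨A, hA, inj_of_split _ ?_⟩
  intro M _ _ _ i hi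
  obtain ⟨X, hX, hXmax⟩ := set_has_maximal_iff_noetherian.2
    (inferInstanceAs (IsNoetherian R M)) {X : Submodule R M | X ⊓ LinearMap.range i = ⊥}
    ⟨⊥, by simp⟩
  have hX : X ⊓ LinearMap.range i = ⊥ := hX
  let q : A →ₗ[R] (M ⧸ X) := X.mkQ ∘ₗ i
  have hq : Function.Injective q := by
    rw [← LinearMap.ker_eq_bot, LinearMap.ker_eq_bot']
    intro a ha
    have h3 : i a ∈ X := (Submodule.Quotient.mk_eq_zero X).1 ha
    have h4 : i a ∈ X ⊓ LinearMap.range i := ⟨h3, ⟨a, rfl⟩⟩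
    rw [hX, Submodule.mem_bot] at h4
    exact hi (by rw [h4, map_zero])
  have hU : UnifOver R S (M ⧸ X) := by
    obtain ⟨T, ⟨e⟩, hT⟩ := hA
    refine ⟨T.map q, ⟨(Submodule.equivMapOfInjective q hq T).symm.trans e⟩, fun B hB => ?_⟩
    rw [Submodule.map_le_iff_le_comap]
    apply hT
    intro h0
    have hlt : X < B.comap X.mkQ := by
      refine lt_of_le_of_ne ?_ ?_
      · intro x hx
        have : X.mkQ x = 0 := (Submodule.Quotient.mk_eq_zero X).2 hx
        rw [Submodule.mem_comap, this]
        exact zero_mem _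
      · intro h
        apply hB
        rw [eq_bot_iff]
        intro b hb
        obtain ⟨m, rfl⟩ := X.mkQ_surjective b
        have : m ∈ B.comap X.mkQ := hb
        rw [← h] at this
        exact (Submodule.Quotient.mk_eq_zero X).2 this
    refine hXmax _ ?_ hlt
    change _ = _
    rw [eq_bot_iff]
    rintro _ ⟨hx, ⟨a, rfl⟩⟩
    have : a ∈ B.comap q := hx
    rw [h0, Submodule.mem_bot] at this
    rw [this, map_zero]; exact zero_mem _
  obtain ⟨A', ⟨e⟩⟩ := embed_unif h2 hU
  have hle := hmax' A' (hU.congr e)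
  have hsurj : LinearMap.range q = ⊤ := by
    by_contra hne
    have h3 := Submodule.length_lt hne
    rw [← (LinearEquiv.ofInjective q hq).length_eq, e.length_eq] at h3
    exact absurd hle (not_le.2 h3)
  let qe := LinearEquiv.ofBijective q ⟨hq, LinearMap.range_eq_top.1 hsurj⟩
  exact ⟨qe.symm.toLinearMap ∘ₗ X.mkQ, fun a => qe.symm_apply_apply a⟩

theorem proj_of_inj {R : Type u} [Ring R] (E : Submodule R R) (h : Module.Injective R E) :
    Module.Projective R E := by
  obtain ⟨r, hr⟩ := h.out E.subtype E.subtype_injective LinearMap.id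
  exact Module.Projective.of_split E.subtype r (LinearMap.ext hr)

theorem coatom_unique {R : Type u} [Ring R] (ha : IsArtinianRing R) {S A : Type u}
    [AddCommGroup S] [Module R S] [Nontrivial S] [AddCommGroup A] [Module R A] [Module.Finite R A]
    [Module.Projective R A] (hU : UnifOver R S A) (N₁ N₂ : Submodule R A) (h₁ : IsCoatom N₁)
    (h₂ : IsCoatom N₂) : N₁ = N₂ := by
  by_contra hne
  have hsup : N₁ ⊔ N₂ = ⊤ := by
    by_contra h
    have e1 : N₁ ⊔ N₂ = N₁ := by
      by_contra h'
      exact h (h₁.2 _ (lt_of_le_of_ne le_sup_left (Ne.symm h')))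
    have e2 : N₁ ⊔ N₂ = N₂ := by
      by_contra h'
      exact h (h₂.2 _ (lt_of_le_of_ne le_sup_right (Ne.symm h')))
    exact hne (e1.symm.trans e2)
  let p : (N₁ × N₂) →ₗ[R] A := LinearMap.coprod N₁.subtype N₂.subtype
  have hp : Function.Surjective p := by
    intro a
    have : a ∈ N₁ ⊔ N₂ := hsup ▸ Submodule.mem_top
    obtain ⟨x, hx, y, hy, rfl⟩ := Submodule.mem_sup.1 this
    exact ⟨(⟨x, hx⟩, ⟨y, hy⟩), rfl⟩
  obtain ⟨s, hs⟩ := Module.projective_lifting_property p LinearMap.id hp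
  let f : A →ₗ[R] A := N₁.subtype ∘ₗ LinearMap.fst R _ _ ∘ₗ s
  let g : A →ₗ[R] A := N₂.subtype ∘ₗ LinearMap.snd R _ _ ∘ₗ s
  have hfg : ∀ a, f a + g a = a := fun a => LinearMap.congr_fun hs a
  have hf : ∀ a, f a ∈ N₁ := fun a => (s a).1.2
  have hg : ∀ a, g a ∈ N₂ := fun a => (s a).2.2
  obtain ⟨t, ht, hinj⟩ := hU.inj (A' := A)
  by_cases hft : f t = 0
  · have hgt : g t ≠ 0 := by
      have := hfg t
      rw [hft, zero_add] at this
      rwa [this]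
    have hsj := IsArtinian.surjective_of_injective_endomorphism g (hinj g hgt)
    apply h₂.1
    rw [eq_top_iff]
    intro x _
    obtain ⟨y, rfl⟩ := hsj x
    exact hg y
  · have hsj := IsArtinian.surjective_of_injective_endomorphism f (hinj f hft)
    apply h₁.1
    rw [eq_top_iff]
    intro x _
    obtain ⟨y, rfl⟩ := hsj x
    exact hf y

theorem ker_coatom {R : Type u} [Ring R] {A T : Type u} [AddCommGroup A] [Module R A]
    [AddCommGroup T] [Module R T] [IsSimpleModule R T] (p : A →ₗ[R] T) (hp : Surjective p) :
    IsCoatom (LinearMap.ker p) := by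
  rw [← isSimpleModule_iff_isCoatom]
  exact IsSimpleModule.congr (p.quotKerEquivOfSurjective hp)

theorem unif_of_top {R : Type u} [Ring R] (ha : IsArtinianRing R) {S S' A A' T : Type u}
    [AddCommGroup S] [Module R S] [IsSimpleModule R S] [AddCommGroup S'] [Module R S']
    [IsSimpleModule R S'] [AddCommGroup A] [Module R A] [Module.Finite R A]
    [Module.Projective R A] [AddCommGroup A'] [Module R A'] [Module.Finite R A']
    [Module.Projective R A'] [AddCommGroup T] [Module R T] [IsSimpleModule R T]
    (hU : UnifOver R S A) (hU' : UnifOver R S' A') (p : A →ₗ[R] T) (hp : Surjective p)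
    (p' : A' →ₗ[R] T) (hp' : Surjective p') : Nonempty (S ≃ₗ[R] S') := by
  have : Nontrivial S := IsSimpleModule.nontrivial R S
  have : Nontrivial S' := IsSimpleModule.nontrivial R S'
  have : Nontrivial T := IsSimpleModule.nontrivial R T
  obtain ⟨g, hg⟩ := Module.projective_lifting_property p' p hp'
  have hgs : Surjective g := by
    rw [← LinearMap.range_eq_top]
    by_contra hne
    obtain ⟨N, hN, hle⟩ := (eq_top_or_exists_le_coatom (LinearMap.range g)).resolve_left hne
    have h3 := coatom_unique ha hU' N (LinearMap.ker p') hN (ker_coatom p' hp')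
    obtain ⟨x, hx⟩ := exists_ne (0 : T)
    obtain ⟨a, rfl⟩ := hp x
    apply hx
    rw [← hg]
    have : g a ∈ N := hle ⟨a, rfl⟩
    rw [h3] at this
    exact this
  obtain ⟨s, hs⟩ := Module.projective_lifting_property g LinearMap.id hgs
  have hs : ∀ x, g (s x) = x := fun x => LinearMap.congr_fun hs x
  obtain ⟨T₁, ⟨t₁⟩, hT₁⟩ := hU
  obtain ⟨T₂, ⟨t₂⟩, hT₂⟩ := hU'
  have n1 : Nontrivial T₁ := t₁.toEquiv.nontrivial
  have n2 : Nontrivial T₂ := t₂.toEquiv.nontrivial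
  have hgi : LinearMap.ker g = ⊥ := by
    by_contra hk
    have hr : LinearMap.range s ≠ ⊥ := by
      intro h0
      obtain ⟨x, hx⟩ := exists_ne (0 : T₂)
      have : s x ∈ LinearMap.range s := ⟨x, rfl⟩
      rw [h0, Submodule.mem_bot] at this
      have h4 := hs x
      rw [this, map_zero] at h4
      exact hx (Subtype.ext h4.symm)
    obtain ⟨x, hx⟩ := exists_ne (0 : T₁)
    have h5 := hT₁ _ hk x.2
    obtain ⟨y, hy⟩ := hT₁ _ hr x.2
    have h6 : g x = 0 := h5
    rw [← hy, hs] at h6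
    rw [h6, map_zero] at hy
    exact hx (Subtype.ext hy.symm)
  have hgi := LinearMap.ker_eq_bot.1 hgi
  have sm : IsSimpleModule R T₁ := IsSimpleModule.congr t₁
  have em := Submodule.equivMapOfInjective g hgi T₁
  have sm' : IsSimpleModule R (T₁.map g) := IsSimpleModule.congr em.symm
  have hle : T₂ ≤ T₁.map g := hT₂ _ (by
    intro h0
    exact (isSimpleModule_iff_isAtom.1 sm').1 h0)
  have heq : T₂ = T₁.map g := by
    rcases (isSimpleModule_iff_isAtom.1 sm').le_iff.1 hle with h | h
    · exact absurd h (Submodule.nontrivial_iff_ne_bot.1 n2)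
    · exact h
  exact ⟨t₁.symm.trans (em.trans ((LinearEquiv.ofEq _ _ heq.symm).trans t₂))⟩

theorem exists_top {R : Type u} [Ring R] (h1 : IsNoetherianRing R) (h2 : LeftFGF R)
    (ha : IsArtinianRing R) (T : Type u) [AddCommGroup T] [Module R T] [IsSimpleModule R T] :
    ∃ E : Submodule R R, Module.Injective R E ∧ ∃ p : E →ₗ[R] T, Surjective p := by
  have key : ∀ c : isotypicComponents R R, ∃ S : Submodule R R, IsSimpleModule R S ∧
      c.1 = isotypicComponent R R S ∧ ∃ E : Submodule R R, UnifOver R S E ∧ Module.Injective R E ∧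
      ∃ T : Submodule R R, IsSimpleModule R T ∧ ∃ p : E →ₗ[R] T, Surjective p := by
    rintro ⟨c, S, hS, rfl⟩
    obtain ⟨E, hE, hi⟩ := exists_hull h1 h2 ha S
    refine ⟨S, hS, rfl, E, hE, hi, ?_⟩
    have nS : Nontrivial S := IsSimpleModule.nontrivial R S
    have nE : Nontrivial E := by
      obtain ⟨t, ht, _⟩ := hE.inj (A' := R)
      exact ⟨t, 0, ht⟩
    obtain ⟨N, hN, _⟩ := (eq_top_or_exists_le_coatom (⊥ : Submodule R E)).resolve_left bot_ne_top
    have sN : IsSimpleModule R (E ⧸ N) := isSimpleModule_iff_isCoatom.2 hN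
    have : Nontrivial (E ⧸ N) := IsSimpleModule.nontrivial R _
    obtain ⟨T, ⟨e⟩⟩ := embed_unif h2 (unifOver_self (R := R) (E ⧸ N))
    exact ⟨T, IsSimpleModule.congr e.symm, e.toLinearMap ∘ₗ N.mkQ,
      e.surjective.comp N.mkQ_surjective⟩
  choose S hS hc E hU hE T' hT' p hp using key
  let F : isotypicComponents R R → isotypicComponents R R := fun c =>
    ⟨isotypicComponent R R (T' c), T' c, hT' c, rfl⟩
  have iso_of_eq : ∀ A B : Submodule R R, IsSimpleModule R A → IsSimpleModule R B →
      isotypicComponent R R A = isotypicComponent R R B → Nonempty (A ≃ₗ[R] B) := by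
    intro A B hA hB h
    have h3 := IsIsotypicOfType.isotypicComponent R R B
    rw [← h, isIsotypicOfType_submodule_iff] at h3
    exact h3 A A.le_isotypicComponent
  have hF : Injective F := by
    intro c d hcd
    have h3 := congrArg Subtype.val hcd
    obtain ⟨e⟩ := iso_of_eq (T' c) (T' d) (hT' c) (hT' d) h3
    have := proj_of_inj _ (hE c)
    have := proj_of_inj _ (hE d)
    have := hS c
    have := hS d
    have := hT' d
    obtain ⟨f⟩ := unif_of_top ha (hU c) (hU d) (e.toLinearMap ∘ₗ p c) (e.surjective.comp (hp c))
      (p d) (hp d)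
    apply Subtype.ext
    rw [hc c, hc d]
    exact f.isotypicComponent_eq
  have hsurj := Finite.surjective_of_injective hF
  have : Nontrivial T := IsSimpleModule.nontrivial R T
  obtain ⟨B, ⟨e⟩⟩ := embed_unif h2 (unifOver_self (R := R) T)
  have hB : IsSimpleModule R B := IsSimpleModule.congr e.symm
  obtain ⟨c, hcB⟩ := hsurj ⟨isotypicComponent R R B, B, hB, rfl⟩
  obtain ⟨f⟩ := iso_of_eq (T' c) B (hT' c) hB (congrArg Subtype.val hcB)
  exact ⟨E c, hE c, (f.trans e.symm).toLinearMap ∘ₗ p c, (f.trans e.symm).surjective.comp (hp c)⟩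

theorem injective_of_artinian {R : Type u} [Ring R] (h1 : IsNoetherianRing R) (h2 : LeftFGF R)
    (ha : IsArtinianRing R) : Module.Injective R R := by
  let N : Submodule R R :=
    { carrier := {x | ∀ (I : Submodule R R) (φ : I →ₗ[R] R), ∃ ψ : R →ₗ[R] R,
        ∀ i : I, ψ i = φ i * x}
      zero_mem' := fun I φ => ⟨0, fun i => by simp⟩
      add_mem' := fun {x y} hx hy I φ => by
        obtain ⟨ψ, h⟩ := hx I φ
        obtain ⟨ψ', h'⟩ := hy I φ
        exact ⟨ψ + ψ', fun i => by rw [LinearMap.add_apply, h, h', mul_add]⟩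
      smul_mem' := fun c x hx I φ => by
        obtain ⟨ψ, h⟩ := hx I (LinearMap.toSpanSingleton R R c ∘ₗ φ)
        exact ⟨ψ, fun i => by rw [h]; simp [mul_assoc]⟩ }
  have hN : N = ⊤ := by
    by_contra hne
    obtain ⟨m, hm, hle⟩ := (eq_top_or_exists_le_coatom N).resolve_left hne
    have sm : IsSimpleModule R (R ⧸ m) := isSimpleModule_iff_isCoatom.2 hm
    obtain ⟨E, hE, p, hp⟩ := exists_top h1 h2 ha (R ⧸ m)
    have := proj_of_inj _ hE
    obtain ⟨f, hf⟩ := Module.projective_lifting_property m.mkQ p m.mkQ_surjective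
    have : Nontrivial (R ⧸ m) := IsSimpleModule.nontrivial R _
    obtain ⟨x, hx⟩ := exists_ne (0 : R ⧸ m)
    obtain ⟨e, rfl⟩ := hp x
    apply hx
    rw [← hf]
    refine (Submodule.Quotient.mk_eq_zero m).2 (hle ?_)
    intro I φ
    obtain ⟨ψ, hψ⟩ := hE.out I.subtype I.subtype_injective
      (LinearMap.toSpanSingleton R E e ∘ₗ φ)
    refine ⟨f ∘ₗ ψ, fun i => ?_⟩
    have := hψ i
    simp only [Submodule.subtype_apply] at this
    simp [this]
  rw [← Module.Baer.iff_injective]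
  intro I φ
  have h3 : (1 : R) ∈ N := hN ▸ Submodule.mem_top
  obtain ⟨ψ, hψ⟩ := h3 I φ
  exact ⟨ψ, fun x hx => by simpa using hψ ⟨x, hx⟩⟩

/-- left annihilator of a right ideal, as a left ideal -/
def lAnnS {R : Type u} [Ring R] (K : Submodule Rᵐᵒᵖ R) : Submodule R R where
  carrier := {a | ∀ k ∈ K, a * k = 0}
  zero_mem' := fun k _ => zero_mul k
  add_mem' := fun {a b} ha hb k hk => by rw [add_mul, ha k hk, hb k hk, add_zero]
  smul_mem' := fun c a ha k hk => by rw [smul_eq_mul, mul_assoc, ha k hk, mul_zero]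

theorem mem_of_lAnn_fg {R : Type u} [Ring R] (hinj : Module.Injective R R) (K : Submodule Rᵐᵒᵖ R)
    (hK : K.FG) (y : R) (h : ∀ a ∈ lAnnS K, a * y = 0) : y ∈ K := by
  classical
  obtain ⟨s, rfl⟩ := hK
  let i : R →ₗ[R] (s → R) := LinearMap.toSpanSingleton R (s → R) (fun x => (x : R))
  have hl : LinearMap.ker i ≤ LinearMap.ker (LinearMap.toSpanSingleton R R y) := by
    intro a ha
    refine h a ?_
    intro k hk
    induction hk using Submodule.span_induction with
    | mem x hx => exact congrFun ha ⟨x, hx⟩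
    | zero => exact mul_zero a
    | add x z _ _ hx hz => rw [mul_add, hx, hz, add_zero]
    | smul c x _ hx =>
      have : a * (c • x) = (a * x) * c.unop := by
        rw [mul_assoc]; rfl
      rw [this, hx, zero_mul]
  obtain ⟨g, hg⟩ := hinj.out ((LinearMap.ker i).liftQ i le_rfl)
    (LinearMap.ker_eq_bot.1 (Submodule.ker_liftQ_eq_bot _ _ _ le_rfl))
    ((LinearMap.ker i).liftQ (LinearMap.toSpanSingleton R R y) hl)
  have h3 := hg ((LinearMap.ker i).mkQ 1)
  simp only [Submodule.mkQ_apply, Submodule.liftQ_apply, i, LinearMap.toSpanSingleton_apply,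
    one_smul] at h3
  rw [← h3, LinearMap.pi_apply_eq_sum_univ g]
  refine Submodule.sum_mem _ fun x _ => ?_
  exact Submodule.smul_mem _ (op (g fun j => if x = j then 1 else 0))
    (Submodule.subset_span x.2)

theorem right_noeth {R : Type u} [Ring R] (hinj : Module.Injective R R) (ha : IsArtinianRing R) :
    IsNoetherian Rᵐᵒᵖ R := by
  refine ⟨fun K => ?_⟩
  obtain ⟨L, ⟨K₀, hle, hfg, rfl⟩, hmin⟩ := IsArtinian.set_has_minimal (R := R) (M := R)
    {L | ∃ K₀ : Submodule Rᵐᵒᵖ R, K₀ ≤ K ∧ K₀.FG ∧ L = lAnnS K₀}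
    ⟨_, ⊥, bot_le, Submodule.fg_bot, rfl⟩
  have : K = K₀ := by
    refine le_antisymm ?_ hle
    intro x hx
    apply mem_of_lAnn_fg hinj K₀ hfg
    let K₁ := K₀ ⊔ Submodule.span Rᵐᵒᵖ {x}
    have hx1 : x ∈ K₁ := Submodule.mem_sup_right (Submodule.mem_span_singleton_self x)
    have h1 : lAnnS K₁ ≤ lAnnS K₀ := fun a h k hk => h k (Submodule.mem_sup_left hk)
    have h2 : lAnnS K₁ = lAnnS K₀ := by
      by_contra hne
      refine hmin _ ⟨K₁, sup_le hle ?_, hfg.sup (Submodule.fg_span_singleton x), rfl⟩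
        (lt_of_le_of_ne h1 hne)
      rw [Submodule.span_le, Set.singleton_subset_iff]
      exact hx
    rw [← h2]
    exact fun a h => h x hx1
  rw [this]
  exact hfg

theorem mem_of_lAnn {R : Type u} [Ring R] (hinj : Module.Injective R R) (ha : IsArtinianRing R)
    (K : Submodule Rᵐᵒᵖ R) (y : R) (h : ∀ a ∈ lAnnS K, a * y = 0) : y ∈ K :=
  mem_of_lAnn_fg hinj K ((right_noeth hinj ha).noetherian K) y h

theorem right_mult {R : Type u} [Ring R] (h2 : LeftFGF R) (hinj : Module.Injective R R)
    (ha : IsArtinianRing R) (K : Submodule Rᵐᵒᵖ R) :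
    ∀ f : K →ₗ[Rᵐᵒᵖ] R, ∃ c : R, ∀ k : K, f k = c * k := by
  refine Submodule.fg_induction (R := Rᵐᵒᵖ) (M := R)
    (motive := fun (K : Submodule Rᵐᵒᵖ R) _ =>
      ∀ f : K →ₗ[Rᵐᵒᵖ] R, ∃ c : R, ∀ k : K, f k = c * k) ?_ ?_ K
    ((right_noeth hinj ha).noetherian K)
  · intro x f
    let x' : Submodule.span Rᵐᵒᵖ {x} := ⟨x, Submodule.mem_span_singleton_self x⟩
    have hz : f x' ∈ Submodule.span R {x} := by
      by_contra hz
      obtain ⟨y, hy, hne⟩ := ann_sep h2 _ _ hz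
      have hxy := hy x (Submodule.mem_span_singleton_self x)
      apply hne
      have h3 : op y • x' = 0 := Subtype.ext hxy
      have h4 := f.map_smul (op y) x'
      rw [h3, map_zero] at h4
      exact h4.symm
    obtain ⟨c, hc⟩ := Submodule.mem_span_singleton.1 hz
    refine ⟨c, ?_⟩
    rintro ⟨k, hk⟩
    obtain ⟨r, rfl⟩ := Submodule.mem_span_singleton.1 hk
    have h4 := f.map_smul r x'
    have h5 : (⟨r • x, hk⟩ : Submodule.span Rᵐᵒᵖ {x}) = r • x' := rfl
    rw [h5, h4, ← hc]
    exact mul_assoc c x r.unop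
  · intro K₁ K₂ _ _ h₁ h₂ f
    obtain ⟨c₁, hc₁⟩ := h₁ (f ∘ₗ Submodule.inclusion le_sup_left)
    obtain ⟨c₂, hc₂⟩ := h₂ (f ∘ₗ Submodule.inclusion le_sup_right)
    have hmem : c₁ - c₂ ∈ lAnnS K₁ ⊔ lAnnS K₂ := by
      by_contra hn
      obtain ⟨y, hy, hne⟩ := ann_sep h2 _ _ hn
      have hy1 : y ∈ K₁ := mem_of_lAnn hinj ha _ _ fun a h => hy a (Submodule.mem_sup_left h)
      have hy2 : y ∈ K₂ := mem_of_lAnn hinj ha _ _ fun a h => hy a (Submodule.mem_sup_right h)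
      apply hne
      have e1 := hc₁ ⟨y, hy1⟩
      have e2 := hc₂ ⟨y, hy2⟩
      rw [sub_mul, sub_eq_zero]
      exact e1.symm.trans e2
    obtain ⟨d₁, hd₁, d₂, hd₂, hd⟩ := Submodule.mem_sup.1 hmem
    refine ⟨c₁ - d₁, ?_⟩
    rintro ⟨k, hk⟩
    obtain ⟨k₁, hk₁, k₂, hk₂, rfl⟩ := Submodule.mem_sup.1 hk
    have e1 : f ⟨k₁, Submodule.mem_sup_left hk₁⟩ = c₁ * k₁ := hc₁ ⟨k₁, hk₁⟩
    have e2 : f ⟨k₂, Submodule.mem_sup_right hk₂⟩ = c₂ * k₂ := hc₂ ⟨k₂, hk₂⟩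
    have e3 : f ⟨k₁ + k₂, hk⟩ = c₁ * k₁ + c₂ * k₂ := by
      rw [← e1, ← e2, ← map_add]; rfl
    have e4 : d₁ * k₁ = 0 := hd₁ k₁ hk₁
    have e5 : d₂ * k₂ = 0 := hd₂ k₂ hk₂
    have e6 : c₁ - d₁ = c₂ + d₂ := by
      rw [sub_eq_iff_eq_add, add_assoc, add_comm d₂, hd]; abel
    rw [e3, mul_add]
    have e7 : (c₁ - d₁) * k₁ = c₁ * k₁ := by rw [sub_mul, e4, sub_zero]
    have e8 : (c₁ - d₁) * k₂ = c₂ * k₂ := by rw [e6, add_mul, e5, add_zero]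
    rw [e7, e8]

theorem right_injective {R : Type u} [Ring R] (h2 : LeftFGF R) (hinj : Module.Injective R R)
    (ha : IsArtinianRing R) : Module.Injective Rᵐᵒᵖ R := by
  rw [← Module.Baer.iff_injective]
  intro I g
  let K : Submodule Rᵐᵒᵖ R :=
    { carrier := {x | op x ∈ I}
      zero_mem' := by simp
      add_mem' := fun {a b} ha hb => by
        change op (a + b) ∈ I
        rw [op_add]; exact I.add_mem ha hb
      smul_mem' := fun c x hx => I.mul_mem_left c hx }
  let f : K →ₗ[Rᵐᵒᵖ] R :=
    { toFun := fun k => g ⟨op k.1, k.2⟩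
      map_add' := fun a b => g.map_add ⟨op a.1, a.2⟩ ⟨op b.1, b.2⟩
      map_smul' := fun c a => g.map_smul c ⟨op a.1, a.2⟩ }
  obtain ⟨c, hc⟩ := right_mult h2 hinj ha K f
  let φ : Rᵐᵒᵖ →ₗ[Rᵐᵒᵖ] R :=
    { toFun := fun s => c * s.unop
      map_add' := fun a b => by rw [unop_add, mul_add]
      map_smul' := fun t a => (mul_assoc c a.unop t.unop).symm }
  exact ⟨φ, fun x hx => (hc ⟨x.unop, hx⟩).symm⟩

theorem qf_of_artinian {R : Type u} [Ring R] (h1 : IsNoetherianRing R) (h2 : LeftFGF R)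
    (ha : IsArtinianRing R) : QF R :=
  have hinj := injective_of_artinian h1 h2 ha
  ⟨h1, right_noeth hinj ha, hinj, right_injective h2 hinj ha⟩

theorem kasch_of_artinian {R : Type u} [Ring R] (h1 : IsNoetherianRing R) (h2 : LeftFGF R)
    (ha : IsArtinianRing R) : RightKasch R := by
  intro M _ _ hM hn
  have hinj := injective_of_artinian h1 h2 ha
  obtain ⟨m, hm⟩ := hM
  let φ : R →ₗ[Rᵐᵒᵖ] M :=
    { toFun := fun r => op r • m
      map_add' := fun a b => by rw [op_add, add_smul]
      map_smul' := fun c a => mul_smul c (op a) m }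
  have hφ : Surjective φ := by
    intro x
    have : x ∈ Submodule.span Rᵐᵒᵖ {m} := hm ▸ Submodule.mem_top
    obtain ⟨r, hr⟩ := Submodule.mem_span_singleton.1 this
    exact ⟨r.unop, hr⟩
  have h1K : (1 : R) ∉ LinearMap.ker φ := by
    intro h
    have h0 : op (1 : R) • m = 0 := h
    rw [op_one, one_smul] at h0
    obtain ⟨x, hx⟩ := exists_ne (0 : M)
    obtain ⟨r, rfl⟩ := hφ x
    exact hx (by change op r • m = 0; rw [h0, smul_zero])
  have : ∃ a ∈ lAnnS (LinearMap.ker φ), a * 1 ≠ 0 := by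
    by_contra! hc
    exact h1K (mem_of_lAnn hinj ha _ _ hc)
  obtain ⟨a, haK, ha0⟩ := this
  let ψ : R →ₗ[Rᵐᵒᵖ] R :=
    { toFun := fun r => a * r
      map_add' := fun x y => mul_add a x y
      map_smul' := fun c x => (mul_assoc a x c.unop).symm }
  let e := φ.quotKerEquivOfSurjective hφ
  refine ⟨(LinearMap.ker φ).liftQ ψ (fun k hk => haK k hk) ∘ₗ e.symm.toLinearMap, fun h0 => ?_⟩
  have h3 := LinearMap.congr_fun h0 (e ((LinearMap.ker φ).mkQ 1))
  simp only [LinearMap.comp_apply, LinearEquiv.coe_coe, LinearEquiv.symm_apply_apply] at h3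
  exact ha0 h3

theorem semiregular_of_artinian {R : Type u} [Ring R] (ha : IsArtinianRing R) :
    Semiregular R := by
  intro a
  rw [Ideal.jacobson_bot]
  have hs : IsSemisimpleRing (R ⧸ Ring.jacobson R) := IsSemiprimaryRing.isSemisimpleRing
  let mk := Ideal.Quotient.mk (Ring.jacobson R)
  obtain ⟨C, hC⟩ := exists_isCompl (Ideal.span {mk a})
  have h1 : (1 : R ⧸ Ring.jacobson R) ∈ Ideal.span {mk a} ⊔ C := by
    rw [hC.sup_eq_top]; exact Submodule.mem_top
  obtain ⟨y, hy, c, hc, h3⟩ := Submodule.mem_sup.1 h1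
  obtain ⟨x, rfl⟩ := Ideal.mem_span_singleton'.1 hy
  obtain ⟨x, rfl⟩ := Ideal.Quotient.mk_surjective x
  refine ⟨x, ?_⟩
  rw [← Ideal.Quotient.eq_zero_iff_mem, map_sub, map_mul, map_mul]
  have h4 : mk a * c = mk a - mk a * mk x * mk a := by
    rw [eq_sub_iff_add_eq, mul_assoc, ← mul_add, add_comm c]
    exact (congrArg (mk a * ·) h3).trans (mul_one _)
  have h5 : mk a * c ∈ Ideal.span {mk a} ⊓ C := by
    refine ⟨?_, C.smul_mem (mk a) hc⟩
    rw [h4]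
    exact sub_mem (Ideal.mem_span_singleton_self _)
      (Ideal.mul_mem_left _ _ (Ideal.mem_span_singleton_self _))
  rw [hC.inf_eq_bot] at h5
  change mk a - mk a * mk x * mk a = 0
  rw [← h4]
  exact h5

theorem le_socle {R : Type u} [Ring R] {M : Type u} [AddCommGroup M] [Module R M]
    [IsArtinian R M] (P : Submodule R M) (hP : P ≠ ⊥) : socle R M ⊓ P ≠ ⊥ := by
  obtain ⟨T, hT, hle⟩ := (IsAtomic.eq_bot_or_exists_atom_le P).resolve_left hP
  intro h0
  apply hT.1
  rw [eq_bot_iff, ← h0]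
  exact le_inf (le_sSup (isSimpleModule_iff_isAtom.2 hT)) hle

theorem semiartinian_of_artinian {R : Type u} [Ring R] (ha : IsArtinianRing R) :
    LeftSemiartinian R := by
  intro M _ _ hM hn
  obtain ⟨m, hm⟩ := hM
  have : Module.Finite R M := ⟨⟨{m}, by simpa using hm⟩⟩
  have h3 := le_socle (R := R) (⊤ : Submodule R M) top_ne_bot
  rwa [inf_top_eq] at h3

theorem wqf_of_qf {R : Type u} [Ring R] (h : QF R) : WQF R := by
  obtain ⟨hl, hr, hil, hir⟩ := h
  have hr' : IsNoetherianRing Rᵐᵒᵖ := by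
    let e : R ≃ₗ[Rᵐᵒᵖ] Rᵐᵒᵖ :=
      { toFun := op
        invFun := unop
        map_add' := fun a b => rfl
        map_smul' := fun c a => rfl
        left_inv := fun a => rfl
        right_inv := fun a => rfl }
    exact isNoetherian_of_linearEquiv e
  refine ⟨fun I _ => Module.finitePresentation_of_finite R I, fun I hI => ?_,
    fun F _ _ _ => extVanish_of_injective R F R hil,
    fun F _ _ _ => extVanish_of_injective Rᵐᵒᵖ F R hir⟩
  have : Module.Finite Rᵐᵒᵖ I := Module.Finite.iff_fg.2 hI
  exact Module.finitePresentation_of_finite Rᵐᵒᵖ I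

theorem artinian_of_fpInjective {R : Type u} [Ring R] (h1 : IsNoetherianRing R) (h2 : LeftFGF R)
    (h : FPInjective R R) : IsArtinianRing R := by
  apply artinian_of_injective h1 h2
  rw [← Module.Baer.iff_injective]
  intro I f
  obtain ⟨g, hg⟩ := extend_of_extVanish R R I
    (h (R ⧸ I) (Module.finitePresentation_of_finite R _)) f
  exact ⟨g, fun x hx => hg ⟨x, hx⟩⟩

/-- Proposition 2.14: for a left noetherian left FGF-ring the following are equivalent. -/
theorem stmt_15 (R : Type u) [Ring R] (h1 : IsNoetherianRing R) (h2 : LeftFGF R) :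
    List.TFAE
      [QF R,
       WQF R,
       FPInjective R R,
       RightKasch R,
       Semiregular R,
       LeftSemiartinian R ∨ LeftSemiartinian Rᵐᵒᵖ,
       EssentialSub R (socle R R)] := by
  have key : IsArtinianRing R → QF R := qf_of_artinian h1 h2
  tfae_have 1 → 2 := wqf_of_qf
  tfae_have 2 → 3 := fun h => h.2.2.1
  tfae_have 3 → 1 := fun h => key (artinian_of_fpInjective h1 h2 h)
  tfae_have 4 → 1 := fun h => key (artinian_of_kasch h1 h2 h)
  tfae_have 5 → 1 := fun h => key (artinian_of_semiregular h1 h2 h)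
  tfae_have 6 → 1 := fun h => key (h.elim (artinian_of_semiartinian h1)
    (artinian_of_right_semiartinian h1 h2))
  tfae_have 7 → 1 := fun h => key (artinian_of_essential h1 h2 h)
  tfae_have 1 → 4 := fun h => kasch_of_artinian h1 h2 (artinian_of_injective h1 h2 h.2.2.1)
  tfae_have 1 → 5 := fun h => semiregular_of_artinian (artinian_of_injective h1 h2 h.2.2.1)
  tfae_have 1 → 6 := fun h =>
    Or.inl (semiartinian_of_artinian (artinian_of_injective h1 h2 h.2.2.1))
  tfae_have 1 → 7 := fun h =>
    have := artinian_of_injective h1 h2 h.2.2.1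
    fun P hP => le_socle P hP
  tfae_finish
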